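/- arXiv:1408.1437 — 9 statements merged into one kernel-verified Lean document; each statement's English description precedes it below -/
import Mathlib

section
/- Let Z ⊆ ℝ^n and W ⊆ ℝ^m be closed boxes (products of closed intervals) with nonempty interior and let f = (f_1,…,f_n) : Z × W → ℝ^n be Lipschitz continuous (so that its partial derivatives exist Lebesgue-almost everywhere). Suppose that for every i ∈ {1,…,n} there exist signs δ_ij ∈ {−1, 1} (j = 1,…,n) such that, at almost every point of Z × W at which the partial derivatives exist, δ_ij·(∂f_i/∂z_j) ≥ 0 for all j ∈ {1,…,n} and ∂f_i/∂w_j ≥ 0 for all j ∈ {1,…,m}. Then f is componentwise monotone with signature matrix Δ = [δ_ij]. -/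
/-- A map `f : Z × W → ℝⁿ` is *componentwise monotone* on `Z ⊆ ℝⁿ`, `W ⊆ ℝᵐ`
with signature matrix `δ` (entries `±1`) if for every component `i`,
`δ i j * ξ̲ j ≤ δ i j * ξ̄ j` for all `j` and `w̲ ≤ w̄` componentwise imply
`f ξ̲ w̲ i ≤ f ξ̄ w̄ i`. -/
def CwMonotoneOn (n m : ℕ) (Z : Set (Fin n → ℝ)) (W : Set (Fin m → ℝ))
    (f : (Fin n → ℝ) → (Fin m → ℝ) → Fin n → ℝ) (δ : Fin n → Fin n → ℝ) : Prop :=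
  ∀ i : Fin n, ∀ ξl ∈ Z, ∀ ξu ∈ Z, ∀ wl ∈ W, ∀ wu ∈ W,
    (∀ j, δ i j * ξl j ≤ δ i j * ξu j) → (∀ j, wl j ≤ wu j) →
      f ξl wl i ≤ f ξu wu i

open MeasureTheory Set Filter Topology in
/-- Monotonicity along a direction, for points of an open convex set. -/
theorem le_of_ae_fderiv_nonneg {E : Type*} [NormedAddCommGroup E] [NormedSpace ℝ E]
    [FiniteDimensional ℝ E] [MeasurableSpace E] [BorelSpace E] (μ : Measure E)
    [μ.IsAddHaarMeasure] {g : E → ℝ} {K : NNReal} (hg : LipschitzWith K g)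
    {U : Set E} (hU : IsOpen U) (hUc : Convex ℝ U) (d : E)
    (h : ∀ᵐ p ∂μ, p ∈ U → DifferentiableAt ℝ g p ∧ 0 ≤ fderiv ℝ g p d)
    {x : E} (hx : x ∈ U) (hxd : x + d ∈ U) : g x ≤ g (x + d) := by
  obtain ⟨N, hNsub, hNm, hN0⟩ := exists_measurable_superset_of_null (ae_iff.1 h)
  have h1 : ∀ᵐ t : ℝ, ∀ᵐ p ∂μ, p + t • d ∉ N := by
    refine Eventually.of_forall fun t => ?_
    have : μ ((fun p => p + t • d) ⁻¹' N) = 0 := by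
      rw [measure_preimage_add_right, hN0]
    rw [ae_iff]
    simp only [not_not]
    exact this
  have hmeas : MeasurableSet {x : ℝ × E | x.2 + x.1 • d ∉ N} := by
    have hm : Measurable (fun x : ℝ × E => x.2 + x.1 • d) := by fun_prop
    exact (hm hNm).compl
  have h2 : ∀ᵐ p ∂μ, ∀ᵐ t : ℝ, p + t • d ∉ N :=
    (Measure.ae_ae_comm (p := fun (t : ℝ) (p : E) => p + t • d ∉ N) hmeas).1 h1
  have h3 : ∀ᵐ p ∂μ, p ∈ U → p + d ∈ U → g p ≤ g (p + d) := by
    filter_upwards [h2] with p hp hpU hpdU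
    have hseg : ∀ t ∈ Icc (0 : ℝ) 1, p + t • d ∈ U := fun t ht =>
      hUc.add_smul_mem hpU hpdU ht
    have hlip : LipschitzWith (K * ‖d‖₊) (fun t : ℝ => g (p + t • d)) := by
      refine hg.comp (LipschitzWith.of_dist_le_mul fun s t => ?_)
      rw [dist_add_left, dist_eq_norm, ← sub_smul, norm_smul, mul_comm, ← dist_eq_norm]
      rfl
    have hac := (hlip.lipschitzOnWith (s := uIcc (0 : ℝ) 1)).absolutelyContinuousOnInterval
    have hint := hac.integral_deriv_eq_sub
    have hnn : 0 ≤ ∫ t in (0 : ℝ)..1, deriv (fun t : ℝ => g (p + t • d)) t := by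
      apply intervalIntegral.integral_nonneg_of_ae_restrict zero_le_one
      rw [EventuallyLE, ae_restrict_iff' measurableSet_Icc]
      filter_upwards [hp] with t ht htI
      have hgood : DifferentiableAt ℝ g (p + t • d) ∧ 0 ≤ fderiv ℝ g (p + t • d) d := by
        by_contra hcon
        exact ht (hNsub (fun hh => hcon (hh (hseg t htI))))
      have hd : HasDerivAt (fun t : ℝ => p + t • d) d t := by
        simpa using ((hasDerivAt_id t).smul_const d).const_add p
      have := hgood.1.hasFDerivAt.comp_hasDerivAt t hd
      rw [show deriv (fun t : ℝ => g (p + t • d)) t = _ from this.deriv]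
      exact hgood.2
    rw [hint] at hnn
    simpa using hnn
  have hc : Continuous g := hg.continuous
  have hcd : Continuous (fun p : E => p + d) := by fun_prop
  have hVo : IsOpen ((U ∩ (fun p => p + d) ⁻¹' U) ∩ {p | g (p + d) < g p}) :=
    (hU.inter (hU.preimage hcd)).inter (isOpen_lt (hc.comp hcd) hc)
  have hV0 : μ ((U ∩ (fun p => p + d) ⁻¹' U) ∩ {p | g (p + d) < g p}) = 0 := by
    refine measure_mono_null ?_ (ae_iff.1 h3)
    rintro p ⟨⟨ha, hb⟩, hlt⟩ hh
    exact absurd (hh ha hb) (not_le.2 hlt)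
  have hVe := (hVo.measure_eq_zero_iff μ).1 hV0
  by_contra hcon
  have : x ∈ (U ∩ (fun p => p + d) ⁻¹' U) ∩ {p | g (p + d) < g p} :=
    ⟨⟨hx, hxd⟩, not_le.1 hcon⟩
  rw [hVe] at this
  exact this

open MeasureTheory Set Filter Topology in
/-- Monotonicity along a direction up to the boundary of a convex set. -/
theorem le_of_ae_fderiv_nonneg_closed {E : Type*} [NormedAddCommGroup E] [NormedSpace ℝ E]
    [FiniteDimensional ℝ E] [MeasurableSpace E] [BorelSpace E] (μ : Measure E)
    [μ.IsAddHaarMeasure] {g : E → ℝ} {K : NNReal} (hg : LipschitzWith K g)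
    {S : Set E} (hSc : Convex ℝ S) (hSi : (interior S).Nonempty) {x y : E}
    (h : ∀ᵐ p ∂μ, p ∈ interior S → DifferentiableAt ℝ g p ∧ 0 ≤ fderiv ℝ g p (y - x))
    (hx : x ∈ S) (hy : y ∈ S) : g x ≤ g y := by
  obtain ⟨c, hc⟩ := hSi
  have key : ∀ t ∈ Ioc (0 : ℝ) 1, g (x + t • (c - x)) ≤ g (y + t • (c - y)) := by
    intro t ht
    have e : y + t • (c - y) = (x + t • (c - x)) + (1 - t) • (y - x) := by module
    have hx' := hSc.add_smul_sub_mem_interior hx hc ht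
    have hy' := hSc.add_smul_sub_mem_interior hy hc ht
    rw [e] at hy' ⊢
    refine le_of_ae_fderiv_nonneg μ hg isOpen_interior hSc.interior _ ?_ hx' hy'
    filter_upwards [h] with p hp hpS
    refine ⟨(hp hpS).1, ?_⟩
    rw [map_smul, smul_eq_mul]
    exact mul_nonneg (sub_nonneg.2 ht.2) (hp hpS).2
  have lim : ∀ z : E, Tendsto (fun t : ℝ => g (z + t • (c - z))) (𝓝[>] 0) (𝓝 (g z)) := by
    intro z
    have hcont : Continuous (fun t : ℝ => g (z + t • (c - z))) :=
      hg.continuous.comp (by fun_prop)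
    have := (hcont.tendsto 0).mono_left (nhdsWithin_le_nhds (s := Ioi (0 : ℝ)))
    simpa using this
  refine le_of_tendsto_of_tendsto (lim x) (lim y) ?_
  filter_upwards [Ioc_mem_nhdsGT (zero_lt_one' ℝ)] with t ht using key t ht

/-- **Lemma 1.** Let `Z ⊆ ℝⁿ` and `W ⊆ ℝᵐ` be closed boxes with nonempty
interior and let `f : Z × W → ℝⁿ` be Lipschitz.  If there are signs `δ i j ∈ {−1,1}`
such that at almost every point of `Z × W` where the partial derivatives exist we have
`δ i j * ∂fᵢ/∂zⱼ ≥ 0` and `∂fᵢ/∂wⱼ ≥ 0`, then `f` is componentwise monotone with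
signature matrix `δ`. -/
theorem cwMonotone_of_ae_sign_stable_partials (n m : ℕ)
    (a b : Fin n → ℝ) (u v : Fin m → ℝ)
    (Z : Set (Fin n → ℝ)) (W : Set (Fin m → ℝ))
    (hZ : Z = Set.Icc a b) (hW : W = Set.Icc u v)
    (hZint : (interior Z).Nonempty) (hWint : (interior W).Nonempty)
    (f : (Fin n → ℝ) → (Fin m → ℝ) → Fin n → ℝ)
    (K : NNReal)
    (hf : LipschitzOnWith K (fun p : (Fin n → ℝ) × (Fin m → ℝ) => f p.1 p.2) (Z ×ˢ W))
    (δ : Fin n → Fin n → ℝ) (hδ : ∀ i j, δ i j = 1 ∨ δ i j = -1)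
    (hae : ∀ᵐ p : (Fin n → ℝ) × (Fin m → ℝ)
        ∂(MeasureTheory.volume.restrict (Z ×ˢ W)),
      ∀ i : Fin n,
        (∀ j : Fin n,
          LineDifferentiableAt ℝ (fun q : (Fin n → ℝ) × (Fin m → ℝ) => f q.1 q.2 i) p
            (Pi.single j 1, 0) →
          0 ≤ δ i j *
            lineDeriv ℝ (fun q : (Fin n → ℝ) × (Fin m → ℝ) => f q.1 q.2 i) p
              (Pi.single j 1, 0)) ∧
        (∀ j : Fin m,
          LineDifferentiableAt ℝ (fun q : (Fin n → ℝ) × (Fin m → ℝ) => f q.1 q.2 i) p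
            (0, Pi.single j 1) →
          0 ≤ lineDeriv ℝ (fun q : (Fin n → ℝ) × (Fin m → ℝ) => f q.1 q.2 i) p
            (0, Pi.single j 1))) :
    CwMonotoneOn n m Z W f δ := by
  intro i ξl hξl ξu hξu wl hwl wu hwu hξ hw
  have hfi : LipschitzOnWith K (fun q : (Fin n → ℝ) × (Fin m → ℝ) => f q.1 q.2 i) (Z ×ˢ W) := by
    intro p hp q hq
    exact (edist_le_pi_edist (f p.1 p.2) (f q.1 q.2) i).trans (hf hp hq)
  obtain ⟨g, hg, hfg⟩ := hfi.extend_real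
  have hconv : Convex ℝ (Z ×ˢ W) := by
    rw [hZ, hW]
    exact (convex_Icc a b).prod (convex_Icc u v)
  have hint : (interior (Z ×ˢ W)).Nonempty := by
    rw [interior_prod_eq]
    exact hZint.prod hWint
  have hm : MeasurableSet (Z ×ˢ W) := by
    rw [hZ, hW]
    exact measurableSet_Icc.prod measurableSet_Icc
  have hl : (ξl, wl) ∈ Z ×ˢ W := ⟨hξl, hwl⟩
  have hu : (ξu, wu) ∈ Z ×ˢ W := ⟨hξu, hwu⟩
  have hHaar : (MeasureTheory.volume :
      MeasureTheory.Measure ((Fin n → ℝ) × (Fin m → ℝ))).IsAddHaarMeasure :=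
    MeasureTheory.Measure.prod.instIsAddHaarMeasure MeasureTheory.volume MeasureTheory.volume
  have main : g (ξl, wl) ≤ g (ξu, wu) := by
    refine le_of_ae_fderiv_nonneg_closed MeasureTheory.volume hg hconv hint ?_ hl hu
    rw [MeasureTheory.ae_restrict_iff' hm] at hae
    filter_upwards [hae, hg.ae_differentiableAt] with p hp hgp hpi
    refine ⟨hgp, ?_⟩
    have heq : (fun q : (Fin n → ℝ) × (Fin m → ℝ) => f q.1 q.2 i) =ᶠ[nhds p] g := by
      filter_upwards [mem_interior_iff_mem_nhds.1 hpi] with q hq using hfg hq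
    have hp' := hp (interior_subset hpi) i
    simp only [heq.lineDifferentiableAt_iff, heq.lineDeriv_eq, hgp.lineDeriv_eq_fderiv,
      hgp.lineDifferentiableAt, true_imp_iff] at hp'
    have hdec : ((ξu, wu) - (ξl, wl) : (Fin n → ℝ) × (Fin m → ℝ)) =
        (∑ j, (ξu j - ξl j) • ((Pi.single j 1, 0) : (Fin n → ℝ) × (Fin m → ℝ))) +
        ∑ j, (wu j - wl j) • ((0, Pi.single j 1) : (Fin n → ℝ) × (Fin m → ℝ)) := by
      ext k <;>
        simp [Prod.fst_sum, Prod.snd_sum, Finset.sum_apply, Pi.single_apply]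
    rw [hdec, map_add, map_sum, map_sum]
    refine add_nonneg (Finset.sum_nonneg fun j _ => ?_) (Finset.sum_nonneg fun j _ => ?_)
    · rw [map_smul, smul_eq_mul]
      have h1 := hp'.1 j
      have h2 := hξ j
      rcases hδ i j with h | h <;> rw [h] at h1 h2
      · exact mul_nonneg (by linarith) (by linarith)
      · exact mul_nonneg_of_nonpos_of_nonpos (by linarith) (by linarith)
    · rw [map_smul, smul_eq_mul]
      exact mul_nonneg (sub_nonneg.2 (hw j)) (hp'.2 j)
  have e1 := hfg hl
  have e2 := hfg hu
  simp only at e1 e2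
  rw [e1, e2]
  exact main
end

section
/- Let f : ℝ^n → ℝ be Lipschitz continuous and suppose that at Lebesgue-almost every point x ∈ ℝ^n the partial derivatives ∂f/∂x_j (which exist a.e. by Rademacher's theorem) satisfy ∂f/∂x_j(x) ≥ 0 for every j ∈ {1,…,n}. Then f is monotone with respect to the componentwise order: x ≤ y (componentwise) implies f(x) ≤ f(y). -/
open MeasureTheory in
theorem line_mono_aux {n : ℕ}
    (f : (Fin n → ℝ) → ℝ) (K : NNReal) (hf : LipschitzWith K f) (v : Fin n → ℝ)
    (h : ∀ᵐ x ∂(volume : Measure (Fin n → ℝ)), 0 ≤ lineDeriv ℝ f x v)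
    (s : ℝ) (hs : 0 ≤ s) (x : Fin n → ℝ) : f x ≤ f (x + s • v) := by
  have hm : MeasurableSet {x | 0 ≤ lineDeriv ℝ f x v} :=
    measurableSet_le measurable_const (measurable_lineDeriv hf.continuous)
  have h1 : ∀ t : ℝ, ∀ᵐ p ∂(volume : Measure (Fin n → ℝ)), 0 ≤ lineDeriv ℝ f (p + t • v) v := by
    intro t
    exact (measurePreserving_add_right volume (t • v)).quasiMeasurePreserving.ae h
  have h2 : ∀ᵐ p ∂(volume : Measure (Fin n → ℝ)), ∀ᵐ t ∂(volume : Measure ℝ),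
      0 ≤ lineDeriv ℝ f (p + t • v) v := by
    have hm' : MeasurableSet {q : ℝ × (Fin n → ℝ) | 0 ≤ lineDeriv ℝ f (q.2 + q.1 • v) v} := by
      have : Measurable (fun q : ℝ × (Fin n → ℝ) => q.2 + q.1 • v) := by fun_prop
      exact this hm
    exact (Measure.ae_ae_comm hm').1 (Filter.Eventually.of_forall h1)
  have h3 : ∀ᵐ p ∂(volume : Measure (Fin n → ℝ)), f p ≤ f (p + s • v) := by
    filter_upwards [h2] with p hp
    let L : ℝ →L[ℝ] (Fin n → ℝ) := ContinuousLinearMap.smulRight (1 : ℝ →L[ℝ] ℝ) v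
    have hL := hf.comp ((LipschitzWith.const p).add L.lipschitz)
    have hac := (hL.lipschitzOnWith (s := Set.uIcc 0 s)).absolutelyContinuousOnInterval
    have e := hac.integral_deriv_eq_sub
    have hd : ∀ t, deriv (f ∘ fun t => p + L t) t = lineDeriv ℝ f (p + t • v) v := by
      intro t
      have := deriv_comp_const_add (f ∘ fun t => p + L t) t 0
      rw [add_zero] at this
      rw [← this, lineDeriv]
      congr 1
      ext u
      simp [L, add_smul, add_assoc]
    have : 0 ≤ ∫ t in (0:ℝ)..s, deriv (f ∘ fun t => p + L t) t := by
      apply intervalIntegral.integral_nonneg_of_ae hs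
      filter_upwards [hp] with t ht
      rw [hd]; exact ht
    have e' : (∫ t in (0:ℝ)..s, deriv (f ∘ fun t => p + L t) t) = f (p + s • v) - f p := by
      simpa [L] using e
    linarith
  have hc : IsClosed {p | f p ≤ f (p + s • v)} :=
    isClosed_le hf.continuous (hf.continuous.comp (continuous_add_const _))
  have hd : Dense {p | f p ≤ f (p + s • v)} := Measure.dense_of_ae h3
  have := hc.closure_eq ▸ hd x
  exact this

/-- A Lipschitz function `f : ℝⁿ → ℝ` whose partial derivatives
(which exist a.e. by Rademacher's theorem) are nonnegative at Lebesgue-almost every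
point where they exist is monotone with respect to the componentwise order. -/
theorem lipschitz_partialDeriv_ae_nonneg_monotone (n : ℕ)
    (f : (Fin n → ℝ) → ℝ) (K : NNReal) (hf : LipschitzWith K f)
    (hae : ∀ᵐ x ∂(MeasureTheory.volume : MeasureTheory.Measure (Fin n → ℝ)),
      ∀ j : Fin n, LineDifferentiableAt ℝ f x (Pi.single j 1) →
        0 ≤ lineDeriv ℝ f x (Pi.single j 1)) :
    Monotone f := by
  intro x y hxy
  have key : ∀ S : Finset (Fin n),
      f x ≤ f (x + ∑ j ∈ S, (y j - x j) • (Pi.single j 1 : Fin n → ℝ)) := by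
    intro S
    induction S using Finset.induction_on with
    | empty => simp
    | insert a S ha ih =>
      rw [Finset.sum_insert ha, add_comm (_ • _), ← add_assoc]
      refine ih.trans (line_mono_aux f K hf _ ?_ _ (sub_nonneg.2 (hxy a)) _)
      filter_upwards [hae] with p hp
      by_cases hd : LineDifferentiableAt ℝ f p (Pi.single a 1)
      · exact hp a hd
      · rw [lineDeriv_zero_of_not_lineDifferentiableAt hd]
  have h := key Finset.univ
  have e : x + ∑ j, (y j - x j) • (Pi.single j 1 : Fin n → ℝ) = y := by
    ext i
    simp [Finset.sum_apply, Pi.single_apply]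
  rwa [e] at h
end

section
/- Under Assumption 1, for every fixed signal input s the traffic network update map (x, d) ↦ F(x, s, d) = (F_l(x, s, d))_{l∈L} on X × [0,∞)^L is componentwise monotone with signature matrix given by δ_{lk} = −1 if k ∈ L^adj_l and δ_{lk} = +1 otherwise. In particular, each F_l is nondecreasing in x_k for every k ∈ L^down_l ∪ L^up_l, nonincreasing in x_k for every k ∈ L^adj_l, independent of x_k for all other k, and nondecreasing in each d_k. -/
open Finset
open scoped Classical

/-- Outflow `f^out_l(x, s)` of link `l` under signal `s`. -/
noncomputable def fout {L : Type*} [Fintype L]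
    (c xcap : L → ℝ) (β α : L → L → ℝ) (s : Finset L)
    (x : L → ℝ) (l : L) : ℝ :=
  if l ∈ s then
    (Finset.univ.filter fun k => 0 < β l k).fold min (min (x l) (c l))
      fun k => α l k / β l k * (xcap k - x k)
  else 0

/-- Queue update `F_l(x, s, d)`, with `L^up_l = {j : η j = τ l}`. -/
noncomputable def Fupd {L V : Type*} [Fintype L]
    (η : L → V) (τ : L → Option V)
    (c xcap : L → ℝ) (β α : L → L → ℝ) (s : Finset L)
    (x d : L → ℝ) (l : L) : ℝ :=
  min (xcap l)
    (x l - fout c xcap β α s x l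
      + ∑ j ∈ Finset.univ.filter (fun j => τ l = some (η j)), β j l * fout c xcap β α s x j
      + d l)

theorem fout_congr_aux {L : Type*} [Fintype L]
    (c xcap : L → ℝ) (β α : L → L → ℝ) (s : Finset L) (x y : L → ℝ) (l : L)
    (hl : x l = y l) (h : ∀ k, 0 < β l k → x k = y k) :
    fout c xcap β α s x l = fout c xcap β α s y l := by
  unfold fout
  split_ifs with hs
  · rw [hl]
    apply Finset.fold_congr
    intro k hk
    rw [h k (by simpa using hk)]
  · rfl

theorem Fupd_mono_aux {L V : Type*} [Fintype L]
    (η : L → V) (τ : L → Option V) (hself : ∀ l, some (η l) ≠ τ l)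
    (c xcap : L → ℝ)
    (β : L → L → ℝ) (hβ : ∀ l k, 0 ≤ β l k)
    (hβsupp : ∀ l k, 0 < β l k → τ k = some (η l))
    (s : Finset L) (α : L → L → ℝ) (hα : ∀ l k, 0 < α l k)
    (hαsum : ∀ k, (Finset.univ.filter fun j => j ∈ s ∧ some (η j) = τ k).Nonempty →
      ∑ j ∈ Finset.univ.filter (fun j => j ∈ s ∧ some (η j) = τ k), α j k = 1)
    (hA1 : ∀ l k, τ l = some (η k) → 0 < β k l → c l ≤ xcap l - β k l / α k l * c k)
    (l : L) (x x' d d' : L → ℝ)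
    (hadj : ∀ k, k ≠ l → τ k = τ l → x' k ≤ x k)
    (hnadj : ∀ k, ¬(k ≠ l ∧ τ k = τ l) → x k ≤ x' k)
    (hd : d l ≤ d' l) :
    Fupd η τ c xcap β α s x d l ≤ Fupd η τ c xcap β α s x' d' l := by
  have hl : x l ≤ x' l := hnadj l (by simp)
  set D : ℝ := max (x' l) (c l) - max (x l) (c l) with hD
  have hD0 : 0 ≤ D := sub_nonneg.2 (max_le_max_right _ hl)
  have hmm : D + (min (x' l) (c l) - min (x l) (c l)) = x' l - x l := by
    have h1 := max_add_min (x' l) (c l)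
    have h2 := max_add_min (x l) (c l)
    linarith
  -- own outflow
  have hown : fout c xcap β α s x' l - (min (x' l) (c l) - min (x l) (c l))
      ≤ fout c xcap β α s x l := by
    have hm : min (x l) (c l) ≤ min (x' l) (c l) := min_le_min_right _ hl
    unfold fout
    split_ifs with hs
    · have key := (Finset.le_fold_min (s := Finset.univ.filter fun k => 0 < β l k)
        (b := min (x' l) (c l)) (f := fun k => α l k / β l k * (xcap k - x' k)) _).1 le_rfl
      refine (Finset.le_fold_min _).2 ⟨by linarith [key.1], fun k hk => ?_⟩
      have h1 := key.2 k hk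
      have hk' : 0 < β l k := by simpa using hk
      have hx : x k ≤ x' k := hnadj k (fun h => hself l ((hβsupp l k hk').symm.trans h.2))
      have h2 : α l k / β l k * (xcap k - x' k) ≤ α l k / β l k * (xcap k - x k) :=
        mul_le_mul_of_nonneg_left (by linarith) (div_pos (hα l k) hk').le
      linarith
    · linarith
  -- upstream outflow
  have hup : ∀ j, τ l = some (η j) → β j l * fout c xcap β α s x j
      ≤ β j l * fout c xcap β α s x' j + (if j ∈ s then α j l * D else 0) := by
    intro j hj
    by_cases hs : j ∈ s
    swap
    · simp [fout, hs]
    rw [if_pos hs]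
    rcases (hβ j l).eq_or_lt with h0 | hpos
    · rw [← h0]
      have := mul_nonneg (hα j l).le hD0
      simpa using this
    have hr : 0 < α j l / β j l := div_pos (hα j l) hpos
    have hrD : 0 ≤ α j l / β j l * D := mul_nonneg hr.le hD0
    have main : fout c xcap β α s x j - α j l / β j l * D ≤ fout c xcap β α s x' j := by
      unfold fout
      rw [if_pos hs, if_pos hs]
      have key := (Finset.le_fold_min (s := Finset.univ.filter fun k => 0 < β j k)
        (b := min (x j) (c j)) (f := fun k => α j k / β j k * (xcap k - x k)) _).1 le_rfl
      have hxj : x j ≤ x' j := hnadj j (fun h => hself j (hj.symm.trans h.2.symm))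
      have hm : min (x j) (c j) ≤ min (x' j) (c j) := min_le_min_right _ hxj
      refine (Finset.le_fold_min _).2 ⟨by linarith [key.1], fun k hk => ?_⟩
      have h1 := key.2 k hk
      have hk' : 0 < β j k := by simpa using hk
      by_cases hkl : k = l
      · subst hkl
        rw [sub_le_iff_le_add, ← mul_add]
        rcases le_total (c k) (x k) with hcx | hcx
        · refine h1.trans (mul_le_mul_of_nonneg_left ?_ hr.le)
          rw [hD, max_eq_left hcx, max_eq_left (hcx.trans hl)]
          linarith
        · have hA := hA1 k j hj hpos
          have h3 : c j ≤ α j k / β j k * (xcap k - c k) := by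
            have h4 : α j k / β j k * (β j k / α j k * c j) ≤ α j k / β j k * (xcap k - c k) :=
              mul_le_mul_of_nonneg_left (by linarith) hr.le
            have h5 : α j k / β j k * (β j k / α j k * c j) = c j := by
              have := (hα j k).ne'
              have := hpos.ne'
              field_simp
            linarith
          refine (key.1.trans (min_le_right _ _)).trans
            (h3.trans (mul_le_mul_of_nonneg_left ?_ hr.le))
          rw [hD, max_eq_right hcx]
          linarith [le_max_left (x' k) (c k)]
      · have hx : x' k ≤ x k := hadj k hkl ((hβsupp j k hk').trans hj.symm)
        have h2 : α j k / β j k * (xcap k - x k) ≤ α j k / β j k * (xcap k - x' k) :=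
          mul_le_mul_of_nonneg_left (by linarith) (div_pos (hα j k) hk').le
        linarith
    have h6 := mul_le_mul_of_nonneg_left main hpos.le
    have h7 : β j l * (α j l / β j l * D) = α j l * D := by
      have := hpos.ne'
      field_simp
    rw [mul_sub, h7] at h6
    linarith
  have hsum : ∑ j ∈ Finset.univ.filter (fun j => τ l = some (η j)), β j l * fout c xcap β α s x j
      ≤ ∑ j ∈ Finset.univ.filter (fun j => τ l = some (η j)), β j l * fout c xcap β α s x' j
        + D := by
    have h1 := Finset.sum_le_sum (s := Finset.univ.filter (fun j => τ l = some (η j)))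
      (fun j hj => hup j (by simpa using hj))
    rw [Finset.sum_add_distrib] at h1
    refine h1.trans (add_le_add_right ?_ _)
    rw [← Finset.sum_filter, Finset.filter_filter, ← Finset.sum_mul]
    have he : (Finset.univ.filter fun j => τ l = some (η j) ∧ j ∈ s)
        = Finset.univ.filter fun j => j ∈ s ∧ some (η j) = τ l := by
      ext j
      simp only [Finset.mem_filter, Finset.mem_univ, true_and]
      exact ⟨fun h => ⟨h.2, h.1.symm⟩, fun h => ⟨h.2.symm, h.1⟩⟩
    rw [he]
    rcases Finset.eq_empty_or_nonempty
      (Finset.univ.filter fun j => j ∈ s ∧ some (η j) = τ l) with h | h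
    · rw [h]
      simpa using hD0
    · rw [hαsum l h, one_mul]
  unfold Fupd
  apply min_le_min_left
  linarith

/-- **Theorem 1.** Under Assumption 1, for a fixed signal input `s` the
traffic update map `(x, d) ↦ F(x, s, d)` on `X × [0,∞)^L` is componentwise monotone with
signature `δ l k = −1` if `k ∈ L^adj_l` and `δ l k = 1` otherwise.  In particular each
`F_l` is nondecreasing in `x k` for `k ∈ L^down_l ∪ L^up_l`, nonincreasing in `x k` for
`k ∈ L^adj_l`, independent of `x k` for all other `k`, and nondecreasing in each `d k`. -/
theorem traffic_componentwise_monotone {L V : Type*} [Fintype L]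
    (η : L → V) (τ : L → Option V) (hself : ∀ l, some (η l) ≠ τ l)
    (c xcap : L → ℝ) (hc : ∀ l, 0 < c l) (hcap : ∀ l, 0 < xcap l)
    (β : L → L → ℝ) (hβ : ∀ l k, 0 ≤ β l k)
    (hβsupp : ∀ l k, 0 < β l k → τ k = some (η l))
    (hβsum : ∀ l, ∑ k ∈ Finset.univ.filter (fun k => τ k = some (η l)), β l k ≤ 1)
    (s : Finset L) (α : L → L → ℝ) (hα : ∀ l k, 0 < α l k)
    (hαsum : ∀ k, (Finset.univ.filter fun j => j ∈ s ∧ some (η j) = τ k).Nonempty →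
      ∑ j ∈ Finset.univ.filter (fun j => j ∈ s ∧ some (η j) = τ k), α j k = 1)
    (hA1 : ∀ l k, τ l = some (η k) → 0 < β k l → c l ≤ xcap l - β k l / α k l * c k)
    (δ : L → L → ℝ)
    (hδ : ∀ l k, δ l k = if k ≠ l ∧ τ k = τ l then (-1 : ℝ) else 1) :
    -- componentwise monotonicity of (x, d) ↦ F(x, s, d) with signature δ
    (∀ l (x x' d d' : L → ℝ),
      (∀ k, 0 ≤ x k ∧ x k ≤ xcap k) → (∀ k, 0 ≤ x' k ∧ x' k ≤ xcap k) →
      (∀ k, 0 ≤ d k) → (∀ k, 0 ≤ d' k) →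
      (∀ k, δ l k * x k ≤ δ l k * x' k) → (∀ k, d k ≤ d' k) →
      Fupd η τ c xcap β α s x d l ≤ Fupd η τ c xcap β α s x' d' l) ∧
    -- F_l nondecreasing in x k for k ∈ L^down_l ∪ L^up_l
    (∀ l k, (τ k = some (η l) ∨ k = l ∨ τ l = some (η k)) →
      ∀ (x d : L → ℝ), (∀ m, 0 ≤ x m ∧ x m ≤ xcap m) → (∀ m, 0 ≤ d m) →
      ∀ p q : ℝ, 0 ≤ p → p ≤ q → q ≤ xcap k →
        Fupd η τ c xcap β α s (Function.update x k p) d l ≤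
          Fupd η τ c xcap β α s (Function.update x k q) d l) ∧
    -- F_l nonincreasing in x k for k ∈ L^adj_l
    (∀ l k, k ≠ l → τ k = τ l →
      ∀ (x d : L → ℝ), (∀ m, 0 ≤ x m ∧ x m ≤ xcap m) → (∀ m, 0 ≤ d m) →
      ∀ p q : ℝ, 0 ≤ p → p ≤ q → q ≤ xcap k →
        Fupd η τ c xcap β α s (Function.update x k q) d l ≤
          Fupd η τ c xcap β α s (Function.update x k p) d l) ∧
    -- F_l independent of x k for all other k
    (∀ l k, ¬(τ k = some (η l) ∨ k = l ∨ τ l = some (η k)) → ¬(k ≠ l ∧ τ k = τ l) →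
      ∀ (x d : L → ℝ) (p q : ℝ),
        Fupd η τ c xcap β α s (Function.update x k p) d l =
          Fupd η τ c xcap β α s (Function.update x k q) d l) ∧
    -- F_l nondecreasing in each d k
    (∀ l k (x d : L → ℝ), (∀ m, 0 ≤ x m ∧ x m ≤ xcap m) →
      ∀ p q : ℝ, 0 ≤ p → p ≤ q →
        Fupd η τ c xcap β α s x (Function.update d k p) l ≤
          Fupd η τ c xcap β α s x (Function.update d k q) l) := by
  have mono := Fupd_mono_aux η τ hself c xcap β hβ hβsupp s α hα hαsum hA1
  refine ⟨?_, ?_, ?_, ?_, ?_⟩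
  · intro l x x' d d' _ _ _ _ hx hd
    refine mono l x x' d d' (fun k h1 h2 => ?_) (fun k h => ?_) (hd l)
    · have := hx k
      rw [hδ, if_pos ⟨h1, h2⟩] at this
      linarith
    · have := hx k
      rw [hδ, if_neg h] at this
      linarith
  · intro l k hk x d _ _ p q _ hpq _
    refine mono l _ _ d d (fun m h1 h2 => ?_) (fun m _ => ?_) le_rfl
    · have hmk : m ≠ k := by
        rintro rfl
        rcases hk with h | h | h
        · exact hself l (h.symm.trans h2)
        · exact h1 h
        · exact hself m (h.symm.trans h2.symm)
      simp [hmk]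
    · by_cases hmk : m = k
      · subst hmk
        simpa using hpq
      · simp [hmk]
  · intro l k hkl hk x d _ _ p q _ hpq _
    refine mono l _ _ d d (fun m _ _ => ?_) (fun m h => ?_) le_rfl
    · by_cases hmk : m = k
      · subst hmk
        simpa using hpq
      · simp [hmk]
    · have hmk : m ≠ k := by
        rintro rfl
        exact h ⟨hkl, hk⟩
      simp [hmk]
  · intro l k h1 h2 x d p q
    have hkl : l ≠ k := fun h => h1 (Or.inr (Or.inl h.symm))
    have hne : ∀ m, m ≠ k → Function.update x k p m = Function.update x k q m := by
      intro m hm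
      simp [hm]
    unfold Fupd
    rw [hne l hkl, fout_congr_aux c xcap β α s _ (Function.update x k q) l (hne l hkl)]
    · congr 3
      apply Finset.sum_congr rfl
      intro j hj
      have hj' : τ l = some (η j) := by simpa using hj
      congr 1
      apply fout_congr_aux
      · apply hne
        rintro rfl
        exact h1 (Or.inr (Or.inr hj'))
      · intro m hm
        apply hne
        rintro rfl
        exact h2 ⟨hkl.symm, (hβsupp j m hm).trans hj'.symm⟩
    · intro m hm
      apply hne
      rintro rfl
      exact h1 (Or.inl (hβsupp l m hm))
  · intro l k x d _ p q _ hpq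
    have : Function.update d k p l ≤ Function.update d k q l := by
      by_cases hlk : l = k
      · subst hlk
        simpa using hpq
      · simp [hlk]
    unfold Fupd
    apply min_le_min_left
    linarith
end

section
/- Fix a signal input s, a link l, and a link k ∈ (L^down_l ∪ L^up_l) \ {l}. Then for any fixed values of all other state coordinates x_m ∈ [0, x^cap_m] (m ≠ k) and any fixed d_l ≥ 0, the map x_k ↦ F_l(x, s, d) is nondecreasing on [0, x^cap_k]. -/
open Finset
open scoped Classical

theorem fold_min_mono_aux {L : Type*} (S : Finset L) (b b' : ℝ) (f g : L → ℝ)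
    (hb : b ≤ b') (h : ∀ i ∈ S, f i ≤ g i) : S.fold min b f ≤ S.fold min b' g := by
  rw [Finset.le_fold_min]
  refine ⟨?_, fun i hi => ?_⟩
  · rw [Finset.fold_min_le]
    exact Or.inl hb
  · rw [Finset.fold_min_le]
    exact Or.inr ⟨i, hi, h i hi⟩

/-- For a fixed signal `s`, link `l`, and `k ∈ (L^down_l ∪ L^up_l) \ {l}`,
with all other coordinates fixed in their capacity ranges and `d l ≥ 0`, the map
`x k ↦ F_l(x, s, d)` is nondecreasing on `[0, xcap k]`. -/
theorem Fupd_monotone_in_down_up {L V : Type*} [Fintype L]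
    (η : L → V) (τ : L → Option V) (hself : ∀ l, some (η l) ≠ τ l)
    (c xcap : L → ℝ) (hc : ∀ l, 0 < c l) (hcap : ∀ l, 0 < xcap l)
    (β : L → L → ℝ) (hβ : ∀ l k, 0 ≤ β l k)
    (hβsupp : ∀ l k, 0 < β l k → τ k = some (η l))
    (hβsum : ∀ l, ∑ k ∈ Finset.univ.filter (fun k => τ k = some (η l)), β l k ≤ 1)
    (s : Finset L) (α : L → L → ℝ) (hα : ∀ l k, 0 < α l k)
    (hαsum : ∀ k, (Finset.univ.filter fun j => j ∈ s ∧ some (η j) = τ k).Nonempty →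
      ∑ j ∈ Finset.univ.filter (fun j => j ∈ s ∧ some (η j) = τ k), α j k = 1)
    (l k : L) (hk : (τ k = some (η l) ∨ τ l = some (η k)) ∧ k ≠ l)
    (x d : L → ℝ) (hx : ∀ m, m ≠ k → 0 ≤ x m ∧ x m ≤ xcap m) (hd : 0 ≤ d l) :
    ∀ p q : ℝ, 0 ≤ p → p ≤ q → q ≤ xcap k →
      Fupd η τ c xcap β α s (Function.update x k p) d l ≤
        Fupd η τ c xcap β α s (Function.update x k q) d l := by
  intro p q hp hpq hq
  have hup : ∀ j, τ l = some (η j) →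
      fout c xcap β α s (Function.update x k p) j ≤
        fout c xcap β α s (Function.update x k q) j := by
    intro j hj
    unfold fout
    split_ifs with hs
    · apply fold_min_mono_aux
      · apply min_le_min _ le_rfl
        by_cases hjk : j = k
        · subst hjk; simpa using hpq
        · simp [Function.update_of_ne hjk]
      · intro i hi
        have hβi : 0 < β j i := by simpa using hi
        have hik : i ≠ k := by
          rintro rfl
          have h1 := hβsupp j i hβi
          rcases hk.1 with h2 | h2
          · exact hself l (by rw [← h2, h1, hj])
          · exact hself i (by rw [← h2, h1, hj])
        simp [Function.update_of_ne hik]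
    · exact le_rfl
  have hl : fout c xcap β α s (Function.update x k q) l ≤
      fout c xcap β α s (Function.update x k p) l := by
    unfold fout
    split_ifs with hs
    · apply fold_min_mono_aux
      · simp [Function.update_of_ne hk.2.symm]
      · intro i hi
        have hβi : 0 < β l i := by simpa using hi
        apply mul_le_mul_of_nonneg_left _ (div_pos (hα l i) hβi).le
        by_cases hik : i = k
        · subst hik; simp only [Function.update_self]; linarith
        · simp [Function.update_of_ne hik]
    · exact le_rfl
  unfold Fupd
  apply min_le_min le_rfl
  have hsum := Finset.sum_le_sum (s := Finset.univ.filter (fun j => τ l = some (η j)))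
    (fun j hj => mul_le_mul_of_nonneg_left (hup j (by simpa using hj)) (hβ j l))
  have e : ∀ r, Function.update x k r l = x l := fun r => Function.update_of_ne hk.2.symm _ _
  rw [e, e]
  linarith
end

section
/- Under Assumption 1, fix a signal input s and a link l. Then for any fixed values of all other state coordinates x_m ∈ [0, x^cap_m] (m ≠ l) and any fixed d_l ≥ 0, the map x_l ↦ F_l(x, s, d) is nondecreasing on [0, x^cap_l]. -/
open Finset
open scoped Classical

theorem le_fout_iff {L : Type*} [Fintype L]
    (c xcap : L → ℝ) (β α : L → L → ℝ) (s : Finset L)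
    (x : L → ℝ) (l : L) (hl : l ∈ s) (t : ℝ) :
    t ≤ fout c xcap β α s x l ↔
      (t ≤ x l ∧ t ≤ c l) ∧ ∀ k, 0 < β l k → t ≤ α l k / β l k * (xcap k - x k) := by
  unfold fout
  rw [if_pos hl, Finset.le_fold_min, le_min_iff]
  simp

/-- Under Assumption 1, for a fixed signal `s` and link `l`, with all
other coordinates fixed in their capacity ranges and `d l ≥ 0`, the map
`x l ↦ F_l(x, s, d)` is nondecreasing on `[0, xcap l]`. -/
theorem Fupd_monotone_in_self {L V : Type*} [Fintype L]
    (η : L → V) (τ : L → Option V) (hself : ∀ l, some (η l) ≠ τ l)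
    (c xcap : L → ℝ) (hc : ∀ l, 0 < c l) (hcap : ∀ l, 0 < xcap l)
    (β : L → L → ℝ) (hβ : ∀ l k, 0 ≤ β l k)
    (hβsupp : ∀ l k, 0 < β l k → τ k = some (η l))
    (hβsum : ∀ l, ∑ k ∈ Finset.univ.filter (fun k => τ k = some (η l)), β l k ≤ 1)
    (s : Finset L) (α : L → L → ℝ) (hα : ∀ l k, 0 < α l k)
    (hαsum : ∀ k, (Finset.univ.filter fun j => j ∈ s ∧ some (η j) = τ k).Nonempty →
      ∑ j ∈ Finset.univ.filter (fun j => j ∈ s ∧ some (η j) = τ k), α j k = 1)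
    (hA1 : ∀ l k, τ l = some (η k) → 0 < β k l → c l ≤ xcap l - β k l / α k l * c k)
    (l : L)
    (x d : L → ℝ) (hx : ∀ m, m ≠ l → 0 ≤ x m ∧ x m ≤ xcap m) (hd : 0 ≤ d l) :
    ∀ p q : ℝ, 0 ≤ p → p ≤ q → q ≤ xcap l →
      Fupd η τ c xcap β α s (Function.update x l p) d l ≤
        Fupd η τ c xcap β α s (Function.update x l q) d l := by
  intro p q hp hpq hq
  have hδ : min p (c l) ≤ min q (c l) := min_le_min_right _ hpq
  have hε : max p (c l) ≤ max q (c l) := max_le_max_right _ hpq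
  have hmp := min_add_max p (c l)
  have hmq := min_add_max q (c l)
  have hself_out : fout c xcap β α s (Function.update x l q) l
      - (min q (c l) - min p (c l)) ≤ fout c xcap β α s (Function.update x l p) l := by
    by_cases hl : l ∈ s
    · obtain ⟨⟨h1, h2⟩, h3⟩ :=
        (le_fout_iff c xcap β α s (Function.update x l q) l hl _).1 le_rfl
      rw [Function.update_self] at h1
      have h12 := le_min h1 h2
      rw [le_fout_iff _ _ _ _ _ _ _ hl, Function.update_self]
      refine ⟨⟨?_, ?_⟩, fun k hk => ?_⟩
      · linarith [min_le_left p (c l)]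
      · linarith [min_le_right p (c l)]
      · have hkl : k ≠ l := by
          rintro rfl
          exact hself k (hβsupp k k hk).symm
        have := h3 k hk
        rw [Function.update_of_ne hkl] at this ⊢
        linarith
    · simp only [fout, if_neg hl]
      linarith
  have hup : ∀ j, τ l = some (η j) →
      β j l * fout c xcap β α s (Function.update x l p) j ≤
        β j l * fout c xcap β α s (Function.update x l q) j
          + (if j ∈ s then α j l else 0) * (max q (c l) - max p (c l)) := by
    intro j hj
    by_cases hjs : j ∈ s
    · rw [if_pos hjs]
      rcases (hβ j l).eq_or_lt with h0 | hpos
      · rw [← h0]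
        have := mul_nonneg (hα j l).le (sub_nonneg.2 hε)
        linarith
      · have hjl : j ≠ l := by
          rintro rfl
          exact hself j hj.symm
        obtain ⟨⟨h1, h2⟩, h3⟩ :=
          (le_fout_iff c xcap β α s (Function.update x l p) j hjs _).1 le_rfl
        have hr : 0 < α j l / β j l := div_pos (hα j l) hpos
        have key : fout c xcap β α s (Function.update x l p) j
            - α j l / β j l * (max q (c l) - max p (c l))
            ≤ fout c xcap β α s (Function.update x l q) j := by
          have hn := mul_nonneg hr.le (sub_nonneg.2 hε)
          rw [le_fout_iff _ _ _ _ _ _ _ hjs]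
          rw [Function.update_of_ne hjl] at h1 ⊢
          refine ⟨⟨by linarith, by linarith⟩, fun k hk => ?_⟩
          have h3k := h3 k hk
          by_cases hkl : k = l
          · subst hkl
            rw [Function.update_self] at h3k ⊢
            have hm : fout c xcap β α s (Function.update x k p) j
                ≤ α j k / β j k * (xcap k - max p (c k)) := by
              rcases max_choice p (c k) with h | h
              · rw [h]; exact h3k
              · rw [h]
                have hA := hA1 k j hj hk
                have e : α j k / β j k * (β j k / α j k * c j) = c j := by
                  have := (hα j k).ne'
                  field_simp
                have := mul_le_mul_of_nonneg_left
                  (show β j k / α j k * c j ≤ xcap k - c k by linarith) hr.le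
                linarith
            have := mul_le_mul_of_nonneg_left (le_max_left q (c k)) hr.le
            linarith
          · rw [Function.update_of_ne hkl] at h3k ⊢
            linarith
        have := mul_le_mul_of_nonneg_left key hpos.le
        have e : β j l * (α j l / β j l * (max q (c l) - max p (c l)))
            = α j l * (max q (c l) - max p (c l)) := by
          field_simp
        linarith
    · simp [fout, if_neg hjs]
  have hsum := Finset.sum_le_sum (s := Finset.univ.filter (fun j => τ l = some (η j)))
    (fun j hj => hup j (Finset.mem_filter.1 hj).2)
  rw [Finset.sum_add_distrib, ← Finset.sum_mul, ← Finset.sum_filter, Finset.filter_filter] at hsum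
  have hset : (Finset.univ.filter fun j => τ l = some (η j) ∧ j ∈ s)
      = Finset.univ.filter fun j => j ∈ s ∧ some (η j) = τ l := by
    ext j
    simp only [Finset.mem_filter, Finset.mem_univ, true_and]
    exact ⟨fun h => ⟨h.2, h.1.symm⟩, fun h => ⟨h.2.symm, h.1⟩⟩
  rw [hset] at hsum
  have hα1 : ∑ j ∈ Finset.univ.filter (fun j => j ∈ s ∧ some (η j) = τ l), α j l ≤ 1 := by
    rcases Finset.eq_empty_or_nonempty
      (Finset.univ.filter (fun j => j ∈ s ∧ some (η j) = τ l)) with h | h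
    · rw [h]; simp
    · exact (hαsum l h).le
  have hfin := mul_le_mul_of_nonneg_right hα1 (sub_nonneg.2 hε)
  unfold Fupd
  apply min_le_min_left
  simp only [Function.update_self]
  linarith
end

section
/- Fix a signal input s, a link l, and a link k ∈ L^adj_l. Then for any fixed values of all other state coordinates x_m ∈ [0, x^cap_m] (m ≠ k) and any fixed d_l ≥ 0, the map x_k ↦ F_l(x, s, d) is nonincreasing on [0, x^cap_k]. -/
open Finset
open scoped Classical

theorem fout_mono_aux {L : Type*} [Fintype L]
    (c xcap : L → ℝ) (β α : L → L → ℝ) (hα : ∀ l k, 0 < α l k) (s : Finset L)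
    (x y : L → ℝ) (l : L) (h1 : x l ≤ y l) (h2 : ∀ m, 0 < β l m → y m ≤ x m) :
    fout c xcap β α s x l ≤ fout c xcap β α s y l := by
  unfold fout
  split_ifs
  · rw [Finset.le_fold_min]
    refine ⟨?_, ?_⟩
    · have h := (Finset.le_fold_min (s := Finset.univ.filter fun k => 0 < β l k)
        (b := min (x l) (c l)) (f := fun k => α l k / β l k * (xcap k - x k)) _).1 le_rfl
      exact h.1.trans (min_le_min_right _ h1)
    · intro m hm
      have h := (Finset.le_fold_min (s := Finset.univ.filter fun k => 0 < β l k)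
        (b := min (x l) (c l)) (f := fun k => α l k / β l k * (xcap k - x k)) _).1 le_rfl
      have hb : 0 < β l m := by simpa using hm
      refine (h.2 m hm).trans ?_
      have := h2 m hb
      exact mul_le_mul_of_nonneg_left (by linarith) (div_pos (hα l m) hb).le
  · exact le_rfl

/-- For a fixed signal `s`, link `l`, and adjacent link `k ∈ L^adj_l`
(i.e. `k ≠ l` and `τ k = τ l`), with all other coordinates fixed in their capacity
ranges and `d l ≥ 0`, the map `x k ↦ F_l(x, s, d)` is nonincreasing on `[0, xcap k]`. -/
theorem Fupd_antitone_in_adjacent {L V : Type*} [Fintype L]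
    (η : L → V) (τ : L → Option V) (hself : ∀ l, some (η l) ≠ τ l)
    (c xcap : L → ℝ) (hc : ∀ l, 0 < c l) (hcap : ∀ l, 0 < xcap l)
    (β : L → L → ℝ) (hβ : ∀ l k, 0 ≤ β l k)
    (hβsupp : ∀ l k, 0 < β l k → τ k = some (η l))
    (hβsum : ∀ l, ∑ k ∈ Finset.univ.filter (fun k => τ k = some (η l)), β l k ≤ 1)
    (s : Finset L) (α : L → L → ℝ) (hα : ∀ l k, 0 < α l k)
    (hαsum : ∀ k, (Finset.univ.filter fun j => j ∈ s ∧ some (η j) = τ k).Nonempty →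
      ∑ j ∈ Finset.univ.filter (fun j => j ∈ s ∧ some (η j) = τ k), α j k = 1)
    (l k : L) (hkl : k ≠ l) (hadj : τ k = τ l)
    (x d : L → ℝ) (hx : ∀ m, m ≠ k → 0 ≤ x m ∧ x m ≤ xcap m) (hd : 0 ≤ d l) :
    ∀ p q : ℝ, 0 ≤ p → p ≤ q → q ≤ xcap k →
      Fupd η τ c xcap β α s (Function.update x k q) d l ≤
        Fupd η τ c xcap β α s (Function.update x k p) d l := by
  intro p q _ hpq _
  have hl : fout c xcap β α s (Function.update x k p) l ≤
      fout c xcap β α s (Function.update x k q) l := by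
    apply fout_mono_aux c xcap β α hα
    · simp [Function.update_of_ne hkl.symm]
    · intro m hm
      have hmk : m ≠ k := by
        rintro rfl
        exact hself l ((hβsupp l m hm).symm.trans hadj)
      simp [Function.update_of_ne hmk]
  unfold Fupd
  refine min_le_min le_rfl ?_
  have hsum : ∑ j ∈ Finset.univ.filter (fun j => τ l = some (η j)),
        β j l * fout c xcap β α s (Function.update x k q) j ≤
      ∑ j ∈ Finset.univ.filter (fun j => τ l = some (η j)),
        β j l * fout c xcap β α s (Function.update x k p) j := by
    refine Finset.sum_le_sum fun j hj => mul_le_mul_of_nonneg_left ?_ (hβ j l)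
    have hj' : τ l = some (η j) := by simpa using hj
    have hjk : j ≠ k := by
      rintro rfl
      exact hself j (hj'.symm.trans hadj.symm)
    apply fout_mono_aux c xcap β α hα
    · simp [Function.update_of_ne hjk]
    · intro m _
      by_cases hmk : m = k
      · subst hmk
        simpa using hpq
      · simp [Function.update_of_ne hmk]
  rw [Function.update_of_ne hkl.symm, Function.update_of_ne hkl.symm]
  linarith
end

section
/- For every state x ∈ X, every signal input s, and every link l, the total inflow to link l is bounded by its residual capacity: ∑_{j ∈ L^up_l} β_{jl}·f^out_j(x, s) ≤ x^cap_l − x_l. Consequently, x_l − f^out_l(x, s) + ∑_{j ∈ L^up_l} β_{jl}·f^out_j(x, s) ≤ x^cap_l; in particular, when d_l = 0 the minimum with x^cap_l in the definition of F_l never strictly binds, i.e. F_l(x, s, d) = x_l − f^out_l(x, s) + ∑_{j ∈ L^up_l} β_{jl}·f^out_j(x, s) whenever d_l = 0. -/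
open Finset
open scoped Classical

/-- For every state `x ∈ X`, signal `s`, and link `l`, the total inflow
to `l` is bounded by its residual capacity, hence
`x l − f^out_l + ∑_{j ∈ L^up_l} β j l · f^out_j ≤ xcap l`; in particular when `d l = 0`
the minimum with `xcap l` in `F_l` never strictly binds. -/
theorem traffic_inflow_le_residual_capacity {L V : Type*} [Fintype L]
    (η : L → V) (τ : L → Option V) (hself : ∀ l, some (η l) ≠ τ l)
    (c xcap : L → ℝ) (hc : ∀ l, 0 < c l) (hcap : ∀ l, 0 < xcap l)
    (β : L → L → ℝ) (hβ : ∀ l k, 0 ≤ β l k)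
    (hβsupp : ∀ l k, 0 < β l k → τ k = some (η l))
    (hβsum : ∀ l, ∑ k ∈ Finset.univ.filter (fun k => τ k = some (η l)), β l k ≤ 1)
    (s : Finset L) (α : L → L → ℝ) (hα : ∀ l k, 0 < α l k)
    (hαsum : ∀ k, (Finset.univ.filter fun j => j ∈ s ∧ some (η j) = τ k).Nonempty →
      ∑ j ∈ Finset.univ.filter (fun j => j ∈ s ∧ some (η j) = τ k), α j k = 1)
    (x : L → ℝ) (hx : ∀ m, 0 ≤ x m ∧ x m ≤ xcap m) (l : L) :
    (∑ j ∈ Finset.univ.filter (fun j => τ l = some (η j)), β j l * fout c xcap β α s x j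
        ≤ xcap l - x l) ∧
    (x l - fout c xcap β α s x l
        + ∑ j ∈ Finset.univ.filter (fun j => τ l = some (η j)), β j l * fout c xcap β α s x j
        ≤ xcap l) ∧
    (∀ d : L → ℝ, d l = 0 →
      Fupd η τ c xcap β α s x d l =
        x l - fout c xcap β α s x l
          + ∑ j ∈ Finset.univ.filter (fun j => τ l = some (η j)),
              β j l * fout c xcap β α s x j) := by
  have hle : ∀ j, j ∈ s → τ l = some (η j) →
      β j l * fout c xcap β α s x j ≤ α j l * (xcap l - x l) := by
    intro j hj hjl
    have hr : 0 ≤ xcap l - x l := by linarith [(hx l).2]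
    rcases (hβ j l).eq_or_lt with h0 | h0
    · rw [← h0, zero_mul]
      exact mul_nonneg (hα j l).le hr
    · have h1 : fout c xcap β α s x j ≤ α j l / β j l * (xcap l - x l) := by
        unfold fout
        rw [if_pos hj]
        exact (Finset.fold_min_le _).2 (Or.inr ⟨l, by simp [h0], le_rfl⟩)
      calc β j l * fout c xcap β α s x j
          ≤ β j l * (α j l / β j l * (xcap l - x l)) := mul_le_mul_of_nonneg_left h1 h0.le
        _ = α j l * (xcap l - x l) := by field_simp
  have hnn : 0 ≤ fout c xcap β α s x l := by
    unfold fout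
    split_ifs with h
    · refine (Finset.le_fold_min _).2 ⟨le_min (hx l).1 (hc l).le, ?_⟩
      intro k _
      exact mul_nonneg (div_nonneg (hα l k).le (hβ l k)) (by linarith [(hx k).2])
    · exact le_rfl
  have hsum : ∑ j ∈ Finset.univ.filter (fun j => τ l = some (η j)),
      β j l * fout c xcap β α s x j
      = ∑ j ∈ Finset.univ.filter (fun j => j ∈ s ∧ some (η j) = τ l),
        β j l * fout c xcap β α s x j := by
    symm
    apply Finset.sum_subset
    · intro j hj
      simp only [Finset.mem_filter, Finset.mem_univ, true_and] at hj ⊢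
      exact hj.2.symm
    · intro j hj hj'
      simp only [Finset.mem_filter, Finset.mem_univ, true_and] at hj hj'
      have hjs : j ∉ s := fun h => hj' ⟨h, hj.symm⟩
      simp [fout, hjs]
  have h1 : ∑ j ∈ Finset.univ.filter (fun j => τ l = some (η j)),
      β j l * fout c xcap β α s x j ≤ xcap l - x l := by
    rw [hsum]
    rcases (Finset.univ.filter fun j => j ∈ s ∧ some (η j) = τ l).eq_empty_or_nonempty with he | hne
    · rw [he, Finset.sum_empty]
      linarith [(hx l).2]
    · calc _ ≤ ∑ j ∈ Finset.univ.filter (fun j => j ∈ s ∧ some (η j) = τ l),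
            α j l * (xcap l - x l) := by
            apply Finset.sum_le_sum
            intro j hj
            simp only [Finset.mem_filter, Finset.mem_univ, true_and] at hj
            exact hle j hj.1 hj.2.symm
        _ = xcap l - x l := by rw [← Finset.sum_mul, hαsum l hne, one_mul]
  refine ⟨h1, by linarith, ?_⟩
  intro d hd
  unfold Fupd
  rw [hd, add_zero]
  exact min_eq_right (by linarith)
end

section
/- Under Assumption 1, let I = {x : x̲ ≤ x ≤ x̄} ⊆ X be a closed box and suppose the disturbance set satisfies D ⊆ ∪_{i=1}^{n_D} D_i with D_i = {d : d̲^i ≤ d ≤ d̄^i} and d̲^i ≥ 0. For each link l define ξ̲^l, ξ̄^l ∈ I by ξ̲^l_k = x̲_k if k ∈ L^down_l ∪ L^up_l, ξ̲^l_k = x̄_k if k ∈ L^adj_l (and, say, ξ̲^l_k = x̲_k for all other k, on which F_l does not depend), and symmetrically ξ̄^l_k = x̄_k if k ∈ L^down_l ∪ L^up_l, ξ̄^l_k = x̲_k if k ∈ L^adj_l. Then for every signal input s, the one-step reachable set Post(I, s) = {F(x, s, d) : x ∈ I, d ∈ D} satisfies Post(I, s) ⊆ ∪_{i=1}^{n_D}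 { x' : F_l(ξ̲^l, s, d̲^i) ≤ x'_l ≤ F_l(ξ̄^l, s, d̄^i) for all l ∈ L }. -/
open Finset
open scoped Classical

theorem fout_le_iff_helper {L : Type*} [Fintype L]
    (c xcap : L → ℝ) (β α : L → L → ℝ) (s : Finset L)
    (x : L → ℝ) (l : L) (hl : l ∈ s) (r : ℝ) :
    r ≤ fout c xcap β α s x l ↔ (r ≤ x l ∧ r ≤ c l) ∧
      ∀ k, 0 < β l k → r ≤ α l k / β l k * (xcap k - x k) := by
  unfold fout
  rw [if_pos hl, Finset.le_fold_min]
  simp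

theorem Fupd_mono_helper {L V : Type*} [Fintype L]
    (η : L → V) (τ : L → Option V) (hself : ∀ l, some (η l) ≠ τ l)
    (c xcap : L → ℝ)
    (β : L → L → ℝ) (hβ : ∀ l k, 0 ≤ β l k)
    (hβsupp : ∀ l k, 0 < β l k → τ k = some (η l))
    (s : Finset L) (α : L → L → ℝ) (hα : ∀ l k, 0 < α l k)
    (hαsum : ∀ k, (Finset.univ.filter fun j => j ∈ s ∧ some (η j) = τ k).Nonempty →
      ∑ j ∈ Finset.univ.filter (fun j => j ∈ s ∧ some (η j) = τ k), α j k = 1)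
    (hA1 : ∀ l k, τ l = some (η k) → 0 < β k l → c l ≤ xcap l - β k l / α k l * c k)
    (l : L) (x y d e : L → ℝ) (hd : d l ≤ e l)
    (hadj : ∀ k, k ≠ l ∧ τ k = τ l → y k ≤ x k)
    (hnon : ∀ k, ¬ (k ≠ l ∧ τ k = τ l) → x k ≤ y k) :
    Fupd η τ c xcap β α s x d l ≤ Fupd η τ c xcap β α s y e l := by
  have hxl : x l ≤ y l := hnon l (by simp)
  obtain ⟨δ, hδ⟩ : ∃ δ, δ = max (y l) (c l) - max (x l) (c l) := ⟨_, rfl⟩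
  have hδ0 : 0 ≤ δ := by
    have := max_le_max_right (c l) hxl
    linarith
  have h2 : x l - fout c xcap β α s x l + δ ≤ y l - fout c xcap β α s y l := by
    have hmx := max_add_min (x l) (c l)
    have hmy := max_add_min (y l) (c l)
    by_cases hl : l ∈ s
    · have hy := (fout_le_iff_helper c xcap β α s y l hl _).1 le_rfl
      have hmin := le_min hy.1.1 hy.1.2
      have hmm : min (x l) (c l) ≤ min (y l) (c l) := min_le_min_right _ hxl
      suffices fout c xcap β α s y l - (y l - x l - δ) ≤ fout c xcap β α s x l by linarith
      rw [fout_le_iff_helper c xcap β α s x l hl]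
      refine ⟨⟨?_, ?_⟩, fun k hk => ?_⟩
      · linarith [min_le_left (x l) (c l)]
      · linarith [min_le_right (x l) (c l)]
      · have h1 := hy.2 k hk
        have hk2 : x k ≤ y k := hnon k (fun h => hself l (by rw [← hβsupp l k hk, h.2]))
        have : α l k / β l k * (xcap k - y k) ≤ α l k / β l k * (xcap k - x k) :=
          mul_le_mul_of_nonneg_left (by linarith) (div_pos (hα l k) hk).le
        linarith
    · have hmm : min (x l) (c l) ≤ min (y l) (c l) := min_le_min_right _ hxl
      simp only [fout, if_neg hl]
      linarith
  have h1 : ∀ j, τ l = some (η j) → β j l * fout c xcap β α s x j ≤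
      β j l * fout c xcap β α s y j + (if j ∈ s then α j l * δ else 0) := by
    intro j hj
    by_cases hs : j ∈ s
    · rw [if_pos hs]
      rcases (hβ j l).eq_or_lt with h0 | h0
      · rw [← h0]
        have := mul_nonneg (hα j l).le hδ0
        linarith
      have hr : 0 < α j l / β j l := div_pos (hα j l) h0
      have key : fout c xcap β α s x j - α j l / β j l * δ ≤ fout c xcap β α s y j := by
        have hx := (fout_le_iff_helper c xcap β α s x j hs _).1 le_rfl
        have hrδ := mul_nonneg hr.le hδ0
        rw [fout_le_iff_helper c xcap β α s y j hs]
        refine ⟨⟨?_, ?_⟩, fun k hk => ?_⟩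
        · have : x j ≤ y j := hnon j (fun h => hself j (by rw [h.2, hj]))
          linarith [hx.1.1]
        · linarith [hx.1.2]
        · by_cases hkl : k = l
          · subst hkl
            have hx3 := hx.2 k hk
            have hle : α j k / β j k * (xcap k - max (x k) (c k)) ≤
                α j k / β j k * (xcap k - y k + δ) :=
              mul_le_mul_of_nonneg_left (by linarith [le_max_left (y k) (c k)]) hr.le
            have hge : fout c xcap β α s x j ≤
                α j k / β j k * (xcap k - max (x k) (c k)) := by
              rcases max_choice (x k) (c k) with h | h
              · rw [h]; exact hx3
              · rw [h]
                refine hx.1.2.trans ?_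
                have hA := hA1 k j hj hk
                have hm : α j k / β j k * (β j k / α j k * c j) ≤
                    α j k / β j k * (xcap k - c k) :=
                  mul_le_mul_of_nonneg_left (by linarith) hr.le
                have he : α j k / β j k * (β j k / α j k * c j) = c j := by
                  have := (hα j k).ne'
                  have := hk.ne'
                  field_simp
                linarith
            linarith
          · have hk2 : y k ≤ x k := hadj k ⟨hkl, by rw [hβsupp j k hk, hj]⟩
            have : α j k / β j k * (xcap k - x k) ≤ α j k / β j k * (xcap k - y k) :=
              mul_le_mul_of_nonneg_left (by linarith) (div_pos (hα j k) hk).le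
            linarith [hx.2 k hk]
      have hm := mul_le_mul_of_nonneg_left key h0.le
      have he : β j l * (fout c xcap β α s x j - α j l / β j l * δ) =
          β j l * fout c xcap β α s x j - α j l * δ := by
        have := h0.ne'
        field_simp
      linarith
    · simp [fout, hs]
  have h3 : ∑ j ∈ Finset.univ.filter (fun j => τ l = some (η j)),
        β j l * fout c xcap β α s x j ≤
      ∑ j ∈ Finset.univ.filter (fun j => τ l = some (η j)),
        β j l * fout c xcap β α s y j + δ := by
    refine (Finset.sum_le_sum (fun j hj => h1 j (Finset.mem_filter.1 hj).2)).trans ?_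
    rw [Finset.sum_add_distrib]
    gcongr
    rw [← Finset.sum_filter, Finset.filter_filter, ← Finset.sum_mul]
    have hset : (Finset.univ.filter fun j => τ l = some (η j) ∧ j ∈ s) =
        Finset.univ.filter fun j => j ∈ s ∧ some (η j) = τ l := by
      ext j
      simp only [Finset.mem_filter, Finset.mem_univ, true_and]
      constructor
      · rintro ⟨h, h'⟩; exact ⟨h', h.symm⟩
      · rintro ⟨h, h'⟩; exact ⟨h'.symm, h⟩
    rw [hset]
    rcases (Finset.univ.filter fun j => j ∈ s ∧ some (η j) = τ l).eq_empty_or_nonempty with h | h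
    · rw [h]; simpa using hδ0
    · rw [hαsum l h, one_mul]
  unfold Fupd
  exact min_le_min_left _ (by linarith)

/-- **Corollary 1.** Under Assumption 1, the one-step reachable set from
a closed box `I = {x : a ≤ x ≤ b} ⊆ X` under signal `s` and disturbances
`D ⊆ ⋃ i, [d̲ⁱ, d̄ⁱ]` is contained in the union over `i` of the boxes whose `l`-th
coordinate is bounded below by `F_l(ξ̲ˡ, s, d̲ⁱ)` and above by `F_l(ξ̄ˡ, s, d̄ⁱ)`,
where `ξ̲ˡ, ξ̄ˡ` are the corners of `I` flipped on the adjacent links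
`L^adj_l = {k ≠ l : τ k = τ l}`. -/
theorem traffic_post_subset_postBar {L V : Type*} [Fintype L]
    (η : L → V) (τ : L → Option V) (hself : ∀ l, some (η l) ≠ τ l)
    (c xcap : L → ℝ) (hc : ∀ l, 0 < c l) (hcap : ∀ l, 0 < xcap l)
    (β : L → L → ℝ) (hβ : ∀ l k, 0 ≤ β l k)
    (hβsupp : ∀ l k, 0 < β l k → τ k = some (η l))
    (hβsum : ∀ l, ∑ k ∈ Finset.univ.filter (fun k => τ k = some (η l)), β l k ≤ 1)
    (s : Finset L) (α : L → L → ℝ) (hα : ∀ l k, 0 < α l k)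
    (hαsum : ∀ k, (Finset.univ.filter fun j => j ∈ s ∧ some (η j) = τ k).Nonempty →
      ∑ j ∈ Finset.univ.filter (fun j => j ∈ s ∧ some (η j) = τ k), α j k = 1)
    (hA1 : ∀ l k, τ l = some (η k) → 0 < β k l → c l ≤ xcap l - β k l / α k l * c k)
    (a b : L → ℝ) (ha : ∀ l, 0 ≤ a l) (hab : ∀ l, a l ≤ b l) (hb : ∀ l, b l ≤ xcap l)
    (nD : ℕ) (dlo dhi : Fin nD → L → ℝ) (hdlo : ∀ i l, 0 ≤ dlo i l)
    (D : Set (L → ℝ)) (hD : D ⊆ ⋃ i : Fin nD, Set.Icc (dlo i) (dhi i)) :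
    ∀ x d : L → ℝ, (∀ l, a l ≤ x l) → (∀ l, x l ≤ b l) → d ∈ D →
      Fupd η τ c xcap β α s x d ∈
        ⋃ i : Fin nD, {x' : L → ℝ | ∀ l,
          Fupd η τ c xcap β α s
              (fun k => if k ≠ l ∧ τ k = τ l then b k else a k) (dlo i) l ≤ x' l ∧
          x' l ≤ Fupd η τ c xcap β α s
              (fun k => if k ≠ l ∧ τ k = τ l then a k else b k) (dhi i) l} := by
  intro x d hax hxb hd
  obtain ⟨i, hi⟩ := Set.mem_iUnion.1 (hD hd)
  refine Set.mem_iUnion.2 ⟨i, fun l => ⟨?_, ?_⟩⟩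
  · refine Fupd_mono_helper η τ hself c xcap β hβ hβsupp s α hα hαsum hA1 l _ _ _ _ (hi.1 l) ?_ ?_
    · intro k hk
      simp only [if_pos hk]
      exact hxb k
    · intro k hk
      simp only [if_neg hk]
      exact hax k
  · refine Fupd_mono_helper η τ hself c xcap β hβ hβsupp s α hα hαsum hA1 l _ _ _ _ (hi.2 l) ?_ ?_
    · intro k hk
      simp only [if_pos hk]
      exact hax k
    · intro k hk
      simp only [if_neg hk]
      exact hxb k
end

section
/- Under Assumption 1, let the disturbance set be a finite union of boxes D = ∪_{i=1}^{n_D} D_i with D_i = {d : d̲^i ≤ d ≤ d̄^i}, d̲^i ≥ 0, and let {I_q}_{q∈Q} be a box partition of X. For q ∈ Q let cl(I_q) = {x : x̲_q ≤ x ≤ x̄_q}, and for each link l define ξ̲^l, ξ̄^l ∈ cl(I_q) by ξ̲^l_k = x̲_{q,k} for k ∈ L^down_l ∪ L^up_l and ξ̲^l_k = x̄_{q,k} for k ∈ L^adj_l, and symmetrically for ξ̄^l. Define P̄ost(cl(I_q), s) = ∪_{i=1}^{n_D} { x' : F_l(ξ̲^l, s, d̲^i) ≤ x'_l ≤ F_l(ξ̄^l,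 s, d̄^i) for all l ∈ L }, and declare a transition (q, s, q') of the finite state abstraction iff I_{q'} ∩ P̄ost(cl(I_q), s) ≠ ∅. Then (q, s, q') is a transition if and only if there exist d ∈ D and x' ∈ I_{q'} such that for every link l ∈ L there exists x ∈ cl(I_q) with x'_l = F_l(x, s, d). -/
open Finset
open scoped Classical

theorem aux_le_fout {L : Type*} [Fintype L] {c xcap : L → ℝ} {β α : L → L → ℝ} {s : Finset L}
    {x : L → ℝ} {l : L} (hl : l ∈ s) (r : ℝ) :
    r ≤ fout c xcap β α s x l ↔ (r ≤ x l ∧ r ≤ c l) ∧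
      ∀ k, 0 < β l k → r ≤ α l k / β l k * (xcap k - x k) := by
  unfold fout
  rw [if_pos hl, Finset.le_fold_min]
  simp

theorem aux_fold_cont {L : Type*} (t : Finset L) (b : ℝ → ℝ) (f : L → ℝ → ℝ)
    (hb : Continuous b) (hf : ∀ k, Continuous (f k)) :
    Continuous (fun u => t.fold min (b u) (fun k => f k u)) := by
  induction t using Finset.induction_on with
  | empty => simpa using hb
  | insert a t ha ih =>
    simp only [Finset.fold_insert ha]
    exact (hf a).min ih

theorem aux_fout_cont {L : Type*} [Fintype L] (c xcap : L → ℝ) (β α : L → L → ℝ) (s : Finset L)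
    (x : ℝ → L → ℝ) (hx : ∀ k, Continuous (fun u => x u k)) (l : L) :
    Continuous (fun u => fout c xcap β α s (x u) l) := by
  unfold fout
  split_ifs
  · apply aux_fold_cont
    · exact (hx l).min continuous_const
    · intro k
      exact continuous_const.mul (continuous_const.sub (hx k))
  · exact continuous_const

theorem aux_F_mono {L V : Type*} [Fintype L]
    (η : L → V) (τ : L → Option V) (hself : ∀ l, some (η l) ≠ τ l)
    (c xcap : L → ℝ)
    (β : L → L → ℝ) (hβ : ∀ l k, 0 ≤ β l k)
    (hβsupp : ∀ l k, 0 < β l k → τ k = some (η l))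
    (s : Finset L) (α : L → L → ℝ) (hα : ∀ l k, 0 < α l k)
    (hαsum : ∀ k, (Finset.univ.filter fun j => j ∈ s ∧ some (η j) = τ k).Nonempty →
      ∑ j ∈ Finset.univ.filter (fun j => j ∈ s ∧ some (η j) = τ k), α j k = 1)
    (hA1 : ∀ l k, τ l = some (η k) → 0 < β k l → c l ≤ xcap l - β k l / α k l * c k)
    (x y d e : L → ℝ) (l : L)
    (hadj : ∀ k, k ≠ l → τ k = τ l → y k ≤ x k)
    (hnon : ∀ k, ¬ (k ≠ l ∧ τ k = τ l) → x k ≤ y k) (hde : d l ≤ e l) :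
    Fupd η τ c xcap β α s x d l ≤ Fupd η τ c xcap β α s y e l := by
  have hl : x l ≤ y l := hnon l (by simp)
  set δ := max (y l) (c l) - max (x l) (c l) with hδ
  have hδ0 : 0 ≤ δ := sub_nonneg.2 (max_le_max_right _ hl)
  -- own outflow
  have h1 : fout c xcap β α s y l ≤ fout c xcap β α s x l + (min (y l) (c l) - min (x l) (c l)) := by
    have hm : min (x l) (c l) ≤ min (y l) (c l) := min_le_min_right _ hl
    by_cases hs : l ∈ s
    · rw [← sub_le_iff_le_add, aux_le_fout hs]
      obtain ⟨⟨ha, hb⟩, hk⟩ := (aux_le_fout (c := c) (xcap := xcap) (β := β) (α := α)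
        (x := y) hs _).1 le_rfl
      have hmin := le_min ha hb
      refine ⟨⟨?_, ?_⟩, ?_⟩
      · linarith [min_le_left (x l) (c l)]
      · linarith [min_le_right (x l) (c l)]
      · intro k hk0
        have hxy : x k ≤ y k := by
          apply hnon
          rintro ⟨-, h⟩
          exact hself l ((hβsupp l k hk0).symm.trans h)
        have hp : 0 ≤ α l k / β l k := (div_pos (hα l k) hk0).le
        have := mul_le_mul_of_nonneg_left (sub_le_sub_left hxy (xcap k)) hp
        linarith [hk k hk0]
    · unfold fout
      rw [if_neg hs, if_neg hs]
      linarith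
  -- upstream outflows
  have h2 : ∀ j, τ l = some (η j) → β j l * fout c xcap β α s x j
      ≤ β j l * fout c xcap β α s y j + (if j ∈ s then α j l * δ else 0) := by
    intro j hj
    by_cases hs : j ∈ s
    · rw [if_pos hs]
      rcases (hβ j l).eq_or_lt with h0 | h0
      · rw [← h0]
        have := mul_nonneg (hα j l).le hδ0
        linarith
      · have key : fout c xcap β α s x j - α j l / β j l * δ ≤ fout c xcap β α s y j := by
          rw [aux_le_fout hs]
          obtain ⟨⟨ha, hb⟩, hk⟩ := (aux_le_fout (c := c) (xcap := xcap) (β := β) (α := α)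
            (x := x) hs _).1 le_rfl
          have hp : 0 < α j l / β j l := div_pos (hα j l) h0
          have hpd := mul_nonneg hp.le hδ0
          refine ⟨⟨?_, ?_⟩, ?_⟩
          · have : x j ≤ y j := by
              apply hnon
              rintro ⟨-, h⟩
              exact hself j (hj.symm.trans h.symm)
            linarith
          · linarith
          · intro k hk0
            by_cases hkl : k = l
            · subst hkl
              have hc2 : c j ≤ α j k / β j k * (xcap k - c k) := by
                have h3 : β j k / α j k * c j ≤ xcap k - c k := by linarith [hA1 k j hj hk0]
                have h4 := mul_le_mul_of_nonneg_left h3 hp.le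
                have h5 : α j k / β j k * (β j k / α j k * c j) = c j := by
                  have := (hα j k).ne'
                  have := hk0.ne'
                  field_simp
                linarith
              have h6 : fout c xcap β α s x j ≤ α j k / β j k * (xcap k - max (x k) (c k)) := by
                rcases max_choice (x k) (c k) with h | h <;> rw [h]
                · exact hk k hk0
                · linarith
              have h7 := mul_le_mul_of_nonneg_left (le_max_left (y k) (c k)) hp.le
              rw [hδ]
              nlinarith
            · have hyx := hadj k hkl ((hβsupp j k hk0).trans hj.symm)
              have hp' : 0 ≤ α j k / β j k := (div_pos (hα j k) hk0).le
              have := mul_le_mul_of_nonneg_left (sub_le_sub_left hyx (xcap k)) hp'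
              linarith [hk k hk0]
        have h8 := mul_le_mul_of_nonneg_left key h0.le
        have h9 : β j l * (α j l / β j l * δ) = α j l * δ := by
          have := h0.ne'
          field_simp
        rw [mul_sub, h9] at h8
        linarith
    · unfold fout
      rw [if_neg hs, if_neg hs, if_neg hs]
      simp
  have h3 : ∑ j ∈ Finset.univ.filter (fun j => τ l = some (η j)),
      (if j ∈ s then α j l * δ else 0) ≤ δ := by
    rw [← Finset.sum_filter, Finset.filter_filter, ← Finset.sum_mul]
    have he : (Finset.univ.filter fun j => τ l = some (η j) ∧ j ∈ s)
        = Finset.univ.filter (fun j => j ∈ s ∧ some (η j) = τ l) := by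
      ext j
      simp only [Finset.mem_filter, Finset.mem_univ, true_and]
      exact ⟨fun h => ⟨h.2, h.1.symm⟩, fun h => ⟨h.2.symm, h.1⟩⟩
    rw [he]
    rcases Finset.eq_empty_or_nonempty
      (Finset.univ.filter (fun j => j ∈ s ∧ some (η j) = τ l)) with h | h
    · rw [h]
      simpa using hδ0
    · rw [hαsum l h, one_mul]
  have h4 := Finset.sum_le_sum (s := Finset.univ.filter (fun j => τ l = some (η j)))
    (fun j hj => h2 j (by simpa using hj))
  rw [Finset.sum_add_distrib] at h4
  unfold Fupd
  apply min_le_min_left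
  have h5 := min_add_max (x l) (c l)
  have h6 := min_add_max (y l) (c l)
  linarith

theorem aux_F_ivt {L V : Type*} [Fintype L]
    (η : L → V) (τ : L → Option V) (c xcap : L → ℝ) (β α : L → L → ℝ) (s : Finset L)
    (a b x y d e : L → ℝ) (l : L) (hx : x ∈ Set.Icc a b) (hy : y ∈ Set.Icc a b)
    (hde : d l ≤ e l) (v : ℝ)
    (h1 : Fupd η τ c xcap β α s x d l ≤ v) (h2 : v ≤ Fupd η τ c xcap β α s y e l) :
    ∃ w, d l ≤ w ∧ w ≤ e l ∧ ∃ z ∈ Set.Icc a b,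
      ∀ g : L → ℝ, g l = w → v = Fupd η τ c xcap β α s z g l := by
  let X : ℝ → L → ℝ := fun u k => x k + u * (y k - x k)
  let W : ℝ → L → ℝ := fun u k => d k + u * (e k - d k)
  have hX : ∀ k, Continuous (fun u => X u k) := fun k => by
    simp only [X]
    fun_prop
  have hW : Continuous (fun u => W u l) := by
    simp only [W]
    fun_prop
  have hF : Continuous (fun u => Fupd η τ c xcap β α s (X u) (W u) l) := by
    unfold Fupd
    refine continuous_const.min ((((hX l).sub (aux_fout_cont c xcap β α s X hX l)).add ?_).add hW)
    exact continuous_finset_sum _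
      (fun j _ => continuous_const.mul (aux_fout_cont c xcap β α s X hX j))
  have hX0 : X 0 = x := by ext k; simp [X]
  have hX1 : X 1 = y := by ext k; simp [X]
  have hW0 : W 0 = d := by ext k; simp [W]
  have hW1 : W 1 = e := by ext k; simp [W]
  have := intermediate_value_Icc (zero_le_one (α := ℝ)) hF.continuousOn
  simp only [hX0, hX1, hW0, hW1] at this
  obtain ⟨u, ⟨hu0, hu1⟩, hu⟩ := this ⟨h1, h2⟩
  refine ⟨W u l, ?_, ?_, X u, ⟨fun k => ?_, fun k => ?_⟩, fun g hg => ?_⟩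
  · simp only [W]; nlinarith
  · simp only [W]; nlinarith
  · have := hx.1 k
    have := hy.1 k
    simp only [X]; nlinarith
  · have := hx.2 k
    have := hy.2 k
    simp only [X]; nlinarith
  · rw [← hu]
    simp only [Fupd, hg]

/-- **Corollary 2.** Under Assumption 1, with disturbance set
`D = ⋃ i, [d̲ⁱ, d̄ⁱ]` and a box partition `{I q}` of `X` with corners `lo q, hi q`
(so `cl(I q) = Icc (lo q) (hi q)`), the CM-induced abstraction has a transition
`(q, s, q')` — i.e. `I q' ∩ P̄ost(cl(I q), s) ≠ ∅` — if and only if there exist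
`d ∈ D` and `x' ∈ I q'` such that for every link `l` there exists `x ∈ cl(I q)` with
`x' l = F_l(x, s, d)`. -/
theorem cm_abstraction_transition_iff {L V : Type*} [Fintype L]
    (η : L → V) (τ : L → Option V) (hself : ∀ l, some (η l) ≠ τ l)
    (c xcap : L → ℝ) (hc : ∀ l, 0 < c l) (hcap : ∀ l, 0 < xcap l)
    (β : L → L → ℝ) (hβ : ∀ l k, 0 ≤ β l k)
    (hβsupp : ∀ l k, 0 < β l k → τ k = some (η l))
    (hβsum : ∀ l, ∑ k ∈ Finset.univ.filter (fun k => τ k = some (η l)), β l k ≤ 1)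
    (s : Finset L) (α : L → L → ℝ) (hα : ∀ l k, 0 < α l k)
    (hαsum : ∀ k, (Finset.univ.filter fun j => j ∈ s ∧ some (η j) = τ k).Nonempty →
      ∑ j ∈ Finset.univ.filter (fun j => j ∈ s ∧ some (η j) = τ k), α j k = 1)
    (hA1 : ∀ l k, τ l = some (η k) → 0 < β k l → c l ≤ xcap l - β k l / α k l * c k)
    (Q : Type*) [Fintype Q] (I : Q → Set (L → ℝ)) (lo hi : Q → L → ℝ)
    (hne : ∀ q, (I q).Nonempty)
    (hsub : ∀ q, I q ⊆ Set.Icc (lo q) (hi q))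
    (hcl : ∀ q, closure (I q) = Set.Icc (lo q) (hi q))
    (hcover : (⋃ q, I q) = Set.Icc (0 : L → ℝ) xcap)
    (hdisj : ∀ q q', q ≠ q' → Disjoint (I q) (I q'))
    (nD : ℕ) (dlo dhi : Fin nD → L → ℝ)
    (hdlo : ∀ i l, 0 ≤ dlo i l) (hdbox : ∀ i, dlo i ≤ dhi i)
    (D : Set (L → ℝ)) (hD : D = ⋃ i : Fin nD, Set.Icc (dlo i) (dhi i))
    (q q' : Q) :
    (I q' ∩
        ⋃ i : Fin nD, {x' : L → ℝ | ∀ l,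
          Fupd η τ c xcap β α s
              (fun k => if k ≠ l ∧ τ k = τ l then hi q k else lo q k) (dlo i) l ≤ x' l ∧
          x' l ≤ Fupd η τ c xcap β α s
              (fun k => if k ≠ l ∧ τ k = τ l then lo q k else hi q k) (dhi i) l}).Nonempty
      ↔ ∃ d ∈ D, ∃ x' ∈ I q', ∀ l, ∃ x : L → ℝ,
          lo q ≤ x ∧ x ≤ hi q ∧ x' l = Fupd η τ c xcap β α s x d l := by
  obtain ⟨p, hp⟩ := hne q
  have hlh : lo q ≤ hi q := (hsub q hp).1.trans (hsub q hp).2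
  constructor
  · rintro ⟨x', hx', hU⟩
    obtain ⟨i, hi'⟩ := Set.mem_iUnion.1 hU
    have hall : ∀ l, ∃ w, dlo i l ≤ w ∧ w ≤ dhi i l ∧ ∃ z ∈ Set.Icc (lo q) (hi q),
        ∀ g : L → ℝ, g l = w → x' l = Fupd η τ c xcap β α s z g l := by
      intro l
      refine aux_F_ivt η τ c xcap β α s (lo q) (hi q) _ _ (dlo i) (dhi i) l ?_ ?_ (hdbox i l) _
        (hi' l).1 (hi' l).2
      · constructor <;> intro k <;> dsimp only <;> split_ifs <;> first | exact hlh k | exact le_rfl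
      · constructor <;> intro k <;> dsimp only <;> split_ifs <;> first | exact hlh k | exact le_rfl
    choose w hw1 hw2 z hz hF using hall
    refine ⟨w, ?_, x', hx', fun l => ⟨z l, (hz l).1, (hz l).2, hF l w rfl⟩⟩
    rw [hD]
    exact Set.mem_iUnion.2 ⟨i, hw1, hw2⟩
  · rintro ⟨d, hd, x', hx', h⟩
    rw [hD] at hd
    obtain ⟨i, hd1, hd2⟩ := Set.mem_iUnion.1 hd
    refine ⟨x', hx', Set.mem_iUnion.2 ⟨i, fun l => ?_⟩⟩
    obtain ⟨x, hx1, hx2, he⟩ := h l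
    rw [he]
    constructor
    · refine aux_F_mono η τ hself c xcap β hβ hβsupp s α hα hαsum hA1 _ _ _ _ l ?_ ?_ (hd1 l)
      · intro k h1 h2
        rw [if_pos ⟨h1, h2⟩]
        exact hx2 k
      · intro k h1
        rw [if_neg h1]
        exact hx1 k
    · refine aux_F_mono η τ hself c xcap β hβ hβsupp s α hα hαsum hA1 _ _ _ _ l ?_ ?_ (hd2 l)
      · intro k h1 h2
        rw [if_pos ⟨h1, h2⟩]
        exact hx1 k
      · intro k h1
        rw [if_neg h1]
        exact hx2 k
end
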